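/- The tangential derivative of the boundary restriction of the singular function Θ (in the direction of increasing x, i.e. counter-clockwise along the boundary of the upper half-plane) equals 0 at every x > 0 and equals −J′ at every x < 0; hence the jump of the one-sided limits at the origin of this tangential derivative equals 0 − (−J′) = J′, reproducing exactly the prescribed jump ⟦g′⟧ of the tangential derivative of the boundary data (identity (2.8) of the paper, case ω = π). -/

import Mathlib

/-!
On the real axis the logarithmic term of `σ` vanishes, so that
`Θ(x,0) = a - (arg(x,0) / π) (J + J' x)`. The argument is locally constant off the origin, equal
to `0` on the right and to `π` on the left, so `Θ(x,0)` is `a` for `x > 0` and `a - (J + J' x)`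
for `x < 0`.
-/

open Real

/-- The principal argument as a function of Cartesian coordinates `(x, y)`. -/
noncomputable def planeArg (x y : ℝ) : ℝ := Complex.arg ((x : ℂ) + (y : ℂ) * Complex.I)

/-- The auxiliary singular function `σ(x,y) = y·log√(x²+y²) + x·arg(x,y)`. -/
noncomputable def sigmaFun (x y : ℝ) : ℝ :=
  y * Real.log (Real.sqrt (x ^ 2 + y ^ 2)) + x * planeArg x y

/-- The singular function at a boundary point with interior angle `ω = π`:
`Θ(x,y) = a − (1/π)(J·arg(x,y) + J′·σ(x,y))`. -/
noncomputable def ThetaFun (a J J' x y : ℝ) : ℝ :=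
  a - (1 / π) * (J * planeArg x y + J' * sigmaFun x y)

open Filter Topology

lemma planeArg_zero_right_of_nonneg {x : ℝ} (hx : 0 ≤ x) : planeArg x 0 = 0 := by
  simp [planeArg, Complex.arg_ofReal_of_nonneg hx]

lemma planeArg_zero_right_of_neg {x : ℝ} (hx : x < 0) : planeArg x 0 = π := by
  simp [planeArg, Complex.arg_ofReal_of_neg hx]

lemma sigmaFun_zero_right (x : ℝ) : sigmaFun x 0 = x * planeArg x 0 := by
  rw [sigmaFun, zero_mul, zero_add]

lemma ThetaFun_zero_right (a J J' x : ℝ) :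
    ThetaFun a J J' x 0 = a - planeArg x 0 / π * (J + J' * x) := by
  rw [ThetaFun, sigmaFun_zero_right]
  ring

lemma ThetaFun_zero_right_of_nonneg (a J J' : ℝ) {x : ℝ} (hx : 0 ≤ x) :
    ThetaFun a J J' x 0 = a := by
  rw [ThetaFun_zero_right, planeArg_zero_right_of_nonneg hx, zero_div, zero_mul, sub_zero]

lemma ThetaFun_zero_right_of_neg (a J J' : ℝ) {x : ℝ} (hx : x < 0) :
    ThetaFun a J J' x 0 = a - (J + J' * x) := by
  rw [ThetaFun_zero_right, planeArg_zero_right_of_neg hx, div_self pi_ne_zero, one_mul]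

lemma hasDerivAt_ThetaFun_zero_right_of_pos (a J J' : ℝ) {x : ℝ} (hx : 0 < x) :
    HasDerivAt (fun t : ℝ => ThetaFun a J J' t 0) 0 x := by
  refine (hasDerivAt_const x a).congr_of_eventuallyEq ?_
  filter_upwards [lt_mem_nhds hx] with t ht
  exact ThetaFun_zero_right_of_nonneg a J J' ht.le

lemma hasDerivAt_ThetaFun_zero_right_of_neg (a J J' : ℝ) {x : ℝ} (hx : x < 0) :
    HasDerivAt (fun t : ℝ => ThetaFun a J J' t 0) (-J') x := by
  have h_affine : HasDerivAt (fun t : ℝ => a - (J + J' * t)) (-J') x :=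
    ((hasDerivAt_const_mul J').const_add J).const_sub a
  refine h_affine.congr_of_eventuallyEq ?_
  filter_upwards [gt_mem_nhds hx] with t ht
  exact ThetaFun_zero_right_of_neg a J J' ht

lemma tendsto_deriv_ThetaFun_zero_right_nhdsGT (a J J' : ℝ) :
    Tendsto (deriv fun t : ℝ => ThetaFun a J J' t 0) (𝓝[>] 0) (𝓝 0) :=
  EventuallyEq.tendsto <| eventually_mem_nhdsWithin.mono fun _ hx =>
    (hasDerivAt_ThetaFun_zero_right_of_pos a J J' hx).deriv

lemma tendsto_deriv_ThetaFun_zero_right_nhdsLT (a J J' : ℝ) :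
    Tendsto (deriv fun t : ℝ => ThetaFun a J J' t 0) (𝓝[<] 0) (𝓝 (-J')) :=
  EventuallyEq.tendsto <| eventually_mem_nhdsWithin.mono fun _ hx =>
    (hasDerivAt_ThetaFun_zero_right_of_neg a J J' hx).deriv

-- `HasDerivAt` rules out the value `0` that `deriv` takes at points of non-differentiability.
theorem Theta_boundary_tangential_derivative_and_jump_general (a J J' : ℝ) :
    (∀ x : ℝ, 0 < x → HasDerivAt (fun t : ℝ => ThetaFun a J J' t 0) 0 x) ∧
    (∀ x : ℝ, x < 0 → HasDerivAt (fun t : ℝ => ThetaFun a J J' t 0) (-J') x) ∧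
    ∃ r l : ℝ, Tendsto (deriv fun t : ℝ => ThetaFun a J J' t 0) (𝓝[>] 0) (𝓝 r) ∧
      Tendsto (deriv fun t : ℝ => ThetaFun a J J' t 0) (𝓝[<] 0) (𝓝 l) ∧ r - l = J' :=
  ⟨fun _ => hasDerivAt_ThetaFun_zero_right_of_pos a J J',
    fun _ => hasDerivAt_ThetaFun_zero_right_of_neg a J J',
    0, -J', tendsto_deriv_ThetaFun_zero_right_nhdsGT a J J',
    tendsto_deriv_ThetaFun_zero_right_nhdsLT a J J', by ring⟩

/-- The tangential derivative of the boundary restriction `x ↦ Θ(x,0)` (in the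
direction of increasing `x`) equals `0` for `x > 0` and `−J′` for `x < 0`; hence the
jump of its one-sided limits at the origin is `0 − (−J′) = J′`, reproducing exactly
the prescribed jump `⟦g′⟧` (identity (2.8) of the paper, case `ω = π`). -/
theorem Theta_boundary_tangential_derivative_and_jump (a J J' : ℝ) :
    (∀ x : ℝ, 0 < x → deriv (fun t : ℝ => ThetaFun a J J' t 0) x = 0) ∧
    (∀ x : ℝ, x < 0 → deriv (fun t : ℝ => ThetaFun a J J' t 0) x = -J') ∧
    (0 : ℝ) - (-J') = J' := by
  obtain ⟨h_pos, h_neg, -⟩ := Theta_boundary_tangential_derivative_and_jump_general a J J'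
  exact ⟨fun x hx => (h_pos x hx).deriv, fun x hx => (h_neg x hx).deriv, by ring⟩
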